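/- arXiv:1804.00367 — 11 statements merged into one kernel-verified Lean document; each statement's English description precedes it below -/
import Mathlib

section
/- Let (G,+) be a finite abelian group, E a field of characteristic 0 or of characteristic p not dividing |G| containing a primitive N-th root of unity, where N = exp(G). Let f : G → E be a function whose Fourier transform f̂ has support equal to a coset φ·K of a subgroup K of the character group Ĝ. Then |supp(f)|·|supp(f̂)| = |G| holds if and only if there exists a ∈ G such that supp(f) = a + H, where H = K^⊥ = {x ∈ G : η(x) = 1 for all η ∈ K}, and f(x) = f(a)·φ(x − a) for all x ∈ a + H (equivalently, f = λ·φ·1_{a+H} with λ = φ(−a)f(a) ≠ 0). -/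
open Function Set

/-- The Fourier transform of `f : G → E`, `f̂(χ) = ∑_{x ∈ G} f(x) χ(-x)`. -/
def fourierTransform {G E : Type*} [AddCommGroup G] [Fintype G] [Field E]
    (f : G → E) (χ : AddChar G E) : E :=
  ∑ x, f x * χ (-x)


section Helpers

variable {G E : Type*} [AddCommGroup G] [Fintype G] [Field E]

theorem aux_card_addChar_le (A : Type*) [AddCommGroup A] [Finite A] :
    Finite (AddChar A E) ∧ Nat.card (AddChar A E) ≤ Nat.card A := by
  cases nonempty_fintype A
  have h : LinearIndependent E (fun ψ : AddChar A E => (ψ : A → E)) :=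
    (linearIndependent_monoidHom (Multiplicative A) E).comp
      (fun ψ : AddChar A E => ψ.toMonoidHom) (AddChar.toMonoidHomEquiv (A := A) (M := E)).injective
  have hf : Finite (AddChar A E) := h.finite
  cases nonempty_fintype (AddChar A E)
  refine ⟨hf, ?_⟩
  have := h.fintype_card_le_finrank
  simpa using this

/-- The annihilator of `K`. -/
def auxPerp (K : Subgroup (AddChar G E)) : AddSubgroup G where
  carrier := {x | ∀ η ∈ K, η x = 1}
  zero_mem' := by intro η _; simp
  add_mem' := by
    intro a b ha hb η hη
    rw [AddChar.map_add_eq_mul, ha η hη, hb η hη, one_mul]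
  neg_mem' := by
    intro a ha η hη
    rw [AddChar.map_neg_eq_inv, ha η hη, inv_one]

theorem aux_mem_perp (K : Subgroup (AddChar G E)) (x : G) :
    x ∈ auxPerp K ↔ ∀ η ∈ K, η x = 1 := Iff.rfl

theorem aux_card_perp (K : Subgroup (AddChar G E)) :
    Nat.card (auxPerp K) * Nat.card K = Nat.card G := by
  have hfin : Finite (AddChar G E) := (aux_card_addChar_le (E := E) G).1
  have hK := aux_card_addChar_le (E := E) (Additive K)
  have hQ := aux_card_addChar_le (E := E) (G ⧸ auxPerp K)
  have hfK := hK.1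
  have hfQ := hQ.1
  let ev : G → AddChar (Additive K) E := fun a =>
    { toFun := fun κ => (κ.toMul : AddChar G E) a
      map_zero_eq_one' := by simp
      map_add_eq_mul' := by intro x y; simp }
  have hev : ∀ a b : G, ev a = ev b ↔ -a + b ∈ auxPerp K := by
    intro a b
    rw [aux_mem_perp]
    constructor
    · intro h η hη
      have : η a = η b := DFunLike.congr_fun h (Additive.ofMul (⟨η, hη⟩ : K))
      rw [AddChar.map_add_eq_mul, ← this, ← AddChar.map_add_eq_mul]
      simp
    · intro h
      ext κ
      have := h (κ.toMul : AddChar G E) κ.toMul.2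
      have h2 : b = a + (-a + b) := by abel
      change (κ.toMul : AddChar G E) a = (κ.toMul : AddChar G E) b
      rw [h2, AddChar.map_add_eq_mul, this, mul_one]
  let F : G ⧸ auxPerp K → AddChar (Additive K) E :=
    Quotient.lift ev (fun a b h => (hev a b).2 (QuotientAddGroup.leftRel_apply.1 h))
  have hF : Function.Injective F := by
    intro p q
    induction p using QuotientAddGroup.induction_on with | H a =>
    induction q using QuotientAddGroup.induction_on with | H b =>
    intro h
    exact QuotientAddGroup.eq.2 ((hev a b).1 h)
  let L : K → AddChar (G ⧸ auxPerp K) E := fun κ =>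
    AddChar.toAddMonoidHomEquiv.symm
      (QuotientAddGroup.lift (auxPerp K) (κ : AddChar G E).toAddMonoidHom
        (fun x hx => hx κ κ.2))
  have hL : Function.Injective L := by
    intro κ κ' h
    ext x
    exact DFunLike.congr_fun h (x : G ⧸ auxPerp K)
  have h1 := Nat.card_le_card_of_injective F hF
  have h2 := Nat.card_le_card_of_injective L hL
  have h3 : Nat.card (Additive K) = Nat.card K := Nat.card_congr Additive.toMul
  have h4 : Nat.card K = Nat.card (G ⧸ auxPerp K) := by omega
  rw [h4, AddSubgroup.card_eq_card_quotient_mul_card_addSubgroup (auxPerp K), mul_comm]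

theorem aux_separate (hroot : ∃ ζ : E, IsPrimitiveRoot ζ (AddMonoid.exponent G))
    (x : G) (hx : x ≠ 0) : ∃ χ : AddChar G E, χ x ≠ 1 := by
  have : NeZero (Monoid.exponent (Multiplicative G)) :=
    ⟨Monoid.exponent_ne_zero_of_finite⟩
  have : HasEnoughRootsOfUnity E (Monoid.exponent (Multiplicative G)) :=
    ⟨by rwa [Monoid.exponent_multiplicative], rootsOfUnity.isCyclic _ _⟩
  obtain ⟨φ, hφ⟩ := CommGroup.exists_apply_ne_one_of_hasEnoughRootsOfUnity
    (Multiplicative G) E (a := Multiplicative.ofAdd x) (by simpa using hx)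
  refine ⟨AddChar.toMonoidHomEquiv.symm ((Units.coeHom E).comp φ), ?_⟩
  intro h
  apply hφ
  ext
  exact h

theorem aux_inj (hchar : (Fintype.card G : E) ≠ 0)
    (hroot : ∃ ζ : E, IsPrimitiveRoot ζ (AddMonoid.exponent G))
    (f : G → E) (h : ∀ χ, fourierTransform f χ = 0) (y : G) : f y = 0 := by
  classical
  have hfin : Finite (AddChar G E) := (aux_card_addChar_le (E := E) G).1
  cases nonempty_fintype (AddChar G E)
  have hbot : auxPerp (⊤ : Subgroup (AddChar G E)) = ⊥ := by
    rw [eq_bot_iff]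
    intro x hx
    by_contra hne
    obtain ⟨χ, hχ⟩ := aux_separate hroot x hne
    exact hχ (hx χ trivial)
  have hcard := aux_card_perp (⊤ : Subgroup (AddChar G E))
  rw [hbot] at hcard
  rw [AddSubgroup.card_bot, one_mul, Subgroup.card_top, Nat.card_eq_fintype_card,
    Nat.card_eq_fintype_card] at hcard
  have hsum : ∀ x : G, ∑ χ : AddChar G E, χ x = if x = 0 then (Fintype.card G : E) else 0 := by
    intro x
    split_ifs with hx
    · simp [hx, ← hcard]
    · obtain ⟨χ, hχ⟩ := aux_separate hroot x hx
      refine eq_zero_of_mul_eq_self_left hχ ?_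
      rw [Finset.mul_sum]
      exact Fintype.sum_equiv (Equiv.mulLeft χ) _ _ fun y => rfl
  have key : ∑ χ : AddChar G E, fourierTransform f χ * χ y = f y * Fintype.card G := by
    simp only [fourierTransform, Finset.sum_mul]
    rw [Finset.sum_comm]
    have : ∀ x : G, ∑ χ : AddChar G E, f x * χ (-x) * χ y
        = f x * if x = y then (Fintype.card G : E) else 0 := by
      intro x
      have h1 := hsum (-x + y)
      simp only [AddChar.map_add_eq_mul, neg_add_eq_zero] at h1
      rw [← h1, Finset.mul_sum]
      exact Finset.sum_congr rfl fun χ _ => by ring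
    simp [this]
  simp only [h, zero_mul, Finset.sum_const_zero] at key
  exact (mul_eq_zero.1 key.symm).resolve_right hchar

theorem aux_shift (f : G → E) (h : G) (c : E) (χ : AddChar G E) :
    fourierTransform (fun x => f (x + h) - c * f x) χ
      = (χ h - c) * fourierTransform f χ := by
  have h1 : ∑ x, f (x + h) * χ (-x) = χ h * ∑ x, f x * χ (-x) := by
    rw [Finset.mul_sum]
    refine Fintype.sum_equiv (Equiv.addRight h) _ _ fun x => ?_
    have : -x = h + -(x + h) := by abel
    rw [this, AddChar.map_add_eq_mul]
    simp only [Equiv.coe_addRight]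
    ring
  simp only [fourierTransform, sub_mul, Finset.sum_sub_distrib, h1]
  simp only [Finset.mul_sum, mul_assoc]

theorem aux_ncard_coset (K : Subgroup (AddChar G E)) (a : G) :
    ({x : G | ∀ η ∈ K, η (x - a) = 1} : Set G).ncard = Nat.card (auxPerp K) := by
  have : ({x : G | ∀ η ∈ K, η (x - a) = 1} : Set G)
      = (fun x => x + a) '' (auxPerp K : Set G) := by
    ext x
    constructor
    · intro hx
      exact ⟨x - a, hx, by simp⟩
    · rintro ⟨y, hy, rfl⟩
      simpa [aux_mem_perp] using hy
  rw [this, Set.ncard_image_of_injective _ (add_left_injective a)]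
  rfl

end Helpers

/-- if `supp f̂` is a coset `φ·K` of a subgroup `K` of the character group,
then `|supp f|·|supp f̂| = |G|` iff `supp f` is a coset `a + H` of `H = K^⊥` and
`f(x) = f(a)·φ(x-a)` on this coset. -/
theorem stmt_0 {G E : Type*} [AddCommGroup G] [Fintype G] [Field E]
    (hchar : (Fintype.card G : E) ≠ 0)
    (hroot : ∃ ζ : E, IsPrimitiveRoot ζ (AddMonoid.exponent G))
    (f : G → E) (K : Subgroup (AddChar G E)) (φ : AddChar G E)
    (hsupp : Function.support (fourierTransform f) = (fun κ => φ * κ) '' (K : Set (AddChar G E))) :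
    (Function.support f).ncard * (Function.support (fourierTransform f)).ncard
        = Fintype.card G ↔
      ∃ a : G,
        Function.support f = {x : G | ∀ η ∈ K, η (x - a) = 1} ∧
        ∀ x : G, (∀ η ∈ K, η (x - a) = 1) → f x = f a * φ (x - a) := by
  have hfin : Finite (AddChar G E) := (aux_card_addChar_le (E := E) G).1
  have hsc : (Function.support (fourierTransform f)).ncard = Nat.card K := by
    rw [hsupp, Set.ncard_image_of_injective _ (mul_right_injective φ)]
    rfl
  have hcard := aux_card_perp K
  have hKpos : 0 < Nat.card K := Nat.card_pos
  rw [hsc, ← Nat.card_eq_fintype_card, ← hcard]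
  have hshift : ∀ x h : G, (∀ η ∈ K, η h = 1) → f (x + h) = φ h * f x := by
    intro x h hh
    have := aux_inj hchar hroot (fun x => f (x + h) - φ h * f x) (fun χ => by
      rw [aux_shift]
      by_cases hχ : fourierTransform f χ = 0
      · rw [hχ, mul_zero]
      · have hm : χ ∈ Function.support (fourierTransform f) := hχ
        rw [hsupp] at hm
        obtain ⟨κ, hκ, rfl⟩ := hm
        simp [hh κ hκ]) x
    exact sub_eq_zero.1 this
  constructor
  · intro hc
    have hc' : (Function.support f).ncard = Nat.card (auxPerp K) :=
      Nat.eq_of_mul_eq_mul_right hKpos hc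
    have hpos : 0 < Nat.card (auxPerp K) := Nat.card_pos
    obtain ⟨a, ha⟩ := Set.nonempty_of_ncard_ne_zero (by omega : (Function.support f).ncard ≠ 0)
    have hval : ∀ x : G, (∀ η ∈ K, η (x - a) = 1) → f x = f a * φ (x - a) := by
      intro x hx
      have := hshift a (x - a) hx
      rw [add_sub_cancel] at this
      rw [this, mul_comm]
    refine ⟨a, ?_, hval⟩
    symm
    apply Set.eq_of_subset_of_ncard_le
    · intro x hx
      rw [Function.mem_support, hval x hx]
      exact mul_ne_zero ha (φ.val_isUnit _).ne_zero
    · rw [aux_ncard_coset, hc']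
    · exact Set.toFinite _
  · rintro ⟨a, hs, -⟩
    rw [hs, aux_ncard_coset]
end

section
/- Let (G,+) be a finite abelian group, E a field, and f : G → E a nonzero function with support S = {x_1,…,x_w}. For an E-valued character χ let v(χ) = (χ(−x_1),…,χ(−x_w)) ∈ E^w, and let Z(f) = {χ : f̂(χ) = 0} denote the set of characters at which the Fourier transform of f vanishes. If A ⊆ Z(f) is a set of characters such that {v(χ) : χ ∈ A} is linearly independent over E, and η is a character with f̂(η) ≠ 0, then {v(χ) : χ ∈ A ∪ {η}} is linearly independent over E. -/
open Function Set

/-- extension rule.  If `A ⊆ Z(f)` has `{v(χ) : χ ∈ A}` linearly independent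
and `f̂(η) ≠ 0`, then `{v(χ) : χ ∈ A ∪ {η}}` is linearly independent, where
`v(χ) = (χ(-x₁), …, χ(-x_w))` for `supp f = {x₁, …, x_w}`. -/
theorem stmt_2 {G E : Type*} [AddCommGroup G] [Fintype G] [Field E]
    (f : G → E) (hf : f ≠ 0)
    {w : ℕ} (x : Fin w → G) (hx : Function.Injective x)
    (hS : Function.support f = Set.range x)
    (A : Set (AddChar G E))
    (hAZ : ∀ χ ∈ A, fourierTransform f χ = 0)
    (hA : LinearIndependent E (fun χ : A => fun i : Fin w => (χ : AddChar G E) (-(x i))))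
    (η : AddChar G E) (hη : fourierTransform f η ≠ 0) :
    LinearIndependent E
      (fun χ : ↥(A ∪ {η}) => fun i : Fin w => (χ : AddChar G E) (-(x i))) := by
  have key : ∀ χ : AddChar G E,
      fourierTransform f χ = ∑ i, f (x i) * χ (-(x i)) := by
    intro χ
    unfold fourierTransform
    symm
    refine Finset.sum_of_injOn x hx.injOn (by simp) ?_ (fun i _ => rfl)
    intro y _ hy
    have hy' : y ∉ Function.support f := by
      rw [hS]
      simpa using hy
    rw [Function.notMem_support.mp hy', zero_mul]
  let v : AddChar G E → Fin w → E := fun χ i => χ (-(x i))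
  let L : (Fin w → E) →ₗ[E] E := Fintype.linearCombination E (fun i => f (x i))
  have hL : ∀ χ, L (v χ) = fourierTransform f χ := by
    intro χ
    rw [key]
    simp [L, v, Fintype.linearCombination_apply, mul_comm]
  have hA' : LinearIndepOn E v A := hA
  have hmem : v η ∉ Submodule.span E (v '' A) := by
    intro h
    have hle : Submodule.span E (v '' A) ≤ LinearMap.ker L := by
      rw [Submodule.span_le]
      rintro _ ⟨χ, hχ, rfl⟩
      change L (v χ) = 0
      rw [hL, hAZ χ hχ]
    have h0 : L (v η) = 0 := hle h
    exact hη (by rw [← hL, h0])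
  have := hA'.insert hmem
  rw [← Set.union_singleton] at this
  exact this
end

section
/- Let (G,+) be a finite abelian group, E a field of characteristic 0 or of characteristic p not dividing |G| containing a primitive N-th root of unity, N = exp(G), and f : G → E a nonzero function. Let N' = supp(f̂) be the support of the Fourier transform of f in the character group Ĝ. If χ_1, …, χ_t is a sequence of characters such that for each i = 2, …, t the translate χ_i·N' is not contained in (χ_1·N') ∪ … ∪ (χ_{i−1}·N'), then |supp(f)| ≥ t. -/
open Function Set

/-- if `χ₁, …, χ_t` is a sequence of characters such that each translate
`χ_i · supp f̂` is not contained in the union of the previous translates, then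
`|supp f| ≥ t`. -/
theorem stmt_3 {G E : Type*} [AddCommGroup G] [Fintype G] [Field E]
    (hchar : (Fintype.card G : E) ≠ 0)
    (hroot : ∃ ζ : E, IsPrimitiveRoot ζ (AddMonoid.exponent G))
    (f : G → E) (hf : f ≠ 0)
    {t : ℕ} (χ : Fin t → AddChar G E)
    (hseq : ∀ i : Fin t, 0 < i.val →
      ¬ ((fun η => χ i * η) '' Function.support (fourierTransform f) ⊆
          ⋃ j < i, (fun η => χ j * η) '' Function.support (fourierTransform f))) :
    t ≤ (Function.support f).ncard := by
  classical
  have key : ∀ (j : Fin t) (ψ : AddChar G E),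
      ∑ x, χ j x * f x * ψ (-x) = fourierTransform f ((χ j)⁻¹ * ψ) := by
    intro j ψ
    unfold fourierTransform
    refine Finset.sum_congr rfl fun x _ => ?_
    rw [AddChar.mul_apply, AddChar.inv_apply, neg_neg]
    ring
  have hli : LinearIndependent E
      (fun (i : Fin t) (x : Function.support f) => χ i x.1 * f x.1) := by
    rw [Fintype.linearIndependent_iff]
    intro c hc
    have hc' : ∀ x : G, ∑ i, c i * (χ i x * f x) = 0 := by
      intro x
      by_cases hx : f x = 0
      · simp [hx]
      · have := congrFun hc ⟨x, hx⟩
        simpa [Finset.sum_apply] using this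
    have hF : ∀ ψ : AddChar G E, ∑ i, c i * fourierTransform f ((χ i)⁻¹ * ψ) = 0 := by
      intro ψ
      simp_rw [← key, Finset.mul_sum]
      rw [Finset.sum_comm]
      refine Finset.sum_eq_zero fun x _ => ?_
      have := congrArg (· * ψ (-x)) (hc' x)
      simp only [Finset.sum_mul, zero_mul] at this
      rw [← this]
      exact Finset.sum_congr rfl fun i _ => by ring
    intro i
    induction i using WellFoundedGT.induction with
    | ind i ih =>
    by_cases hi : 0 < i.val
    · obtain ⟨ψ, ⟨η, hη, rfl⟩, hψ⟩ := Set.not_subset.1 (hseq i hi)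
      have h := hF (χ i * η)
      rw [Finset.sum_eq_single i] at h
      · rw [inv_mul_cancel_left] at h
        exact (mul_eq_zero.1 h).resolve_right hη
      · intro j _ hj
        rcases lt_or_gt_of_ne hj with hlt | hgt
        · by_contra hne
          apply hψ
          simp only [Set.mem_iUnion]
          exact ⟨j, hlt, (χ j)⁻¹ * (χ i * η), right_ne_zero_of_mul hne,
            mul_inv_cancel_left _ _⟩
        · rw [ih j hgt, zero_mul]
      · simp
    · obtain ⟨x, hx⟩ := Function.ne_iff.1 hf
      have h := hc' x
      rw [Finset.sum_eq_single i] at h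
      · refine (mul_eq_zero.1 h).resolve_right (mul_ne_zero ?_ hx)
        exact ((χ i).val_isUnit x).ne_zero
      · intro j _ hj
        have hgt : i < j := by
          have : j.val ≠ i.val := fun h => hj (Fin.ext h)
          rw [Fin.lt_def]
          omega
        rw [ih j hgt, zero_mul]
      · simp
  have := hli.fintype_card_le_finrank
  rw [Module.finrank_fintype_fun_eq_card, Fintype.card_fin] at this
  rwa [Set.ncard_eq_toFinset_card', Set.toFinset_card]
end

section
/- Let (G,+) be a finite abelian group, E a field of characteristic 0 or of characteristic p not dividing |G| containing a primitive N-th root of unity, N = exp(G), and f : G → E a nonzero function with support S = supp(f). If x_1, …, x_t is a sequence of elements of G such that for each i = 2, …, t the translate x_i + S is not contained in (x_1 + S) ∪ … ∪ (x_{i−1} + S), then |supp(f̂)| ≥ t, where f̂ is the Fourier transform of f. -/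
open Function Set

theorem exists_addChar_ne_one {G E : Type*} [AddCommGroup G] [Fintype G] [Field E]
    (hroot : ∃ ζ : E, IsPrimitiveRoot ζ (AddMonoid.exponent G)) {y : G} (hy : y ≠ 0) :
    ∃ ψ : AddChar G E, ψ y ≠ 1 := by
  have hexp : Monoid.exponent (Multiplicative G) = AddMonoid.exponent G :=
    Monoid.exponent_multiplicative
  have : NeZero (AddMonoid.exponent G) := ⟨AddMonoid.exponent_ne_zero_of_finite⟩
  have : HasEnoughRootsOfUnity E (Monoid.exponent (Multiplicative G)) := by
    rw [hexp]
    exact ⟨hroot, inferInstance⟩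
  obtain ⟨φ, hφ⟩ := CommGroup.exists_apply_ne_one_of_hasEnoughRootsOfUnity (Multiplicative G) E
    (a := Multiplicative.ofAdd y) (by simpa using hy)
  refine ⟨AddChar.toMonoidHomEquiv.symm ((Units.coeHom E).comp φ), ?_⟩
  intro h
  apply hφ
  ext
  simpa using h

theorem finite_addChar' {G E : Type*} [AddCommGroup G] [Fintype G] [Field E] :
    Finite (AddChar G E) := by
  have h := (linearIndependent_monoidHom (Multiplicative G) E).comp
    (AddChar.toMonoidHomEquiv (A := G) (M := E)) (AddChar.toMonoidHomEquiv).injective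
  exact h.finite

theorem sum_addChar_eq_zero {G E : Type*} [AddCommGroup G] [Fintype G] [Field E]
    [Fintype (AddChar G E)]
    (hroot : ∃ ζ : E, IsPrimitiveRoot ζ (AddMonoid.exponent G)) {y : G} (hy : y ≠ 0) :
    ∑ χ : AddChar G E, χ y = 0 := by
  obtain ⟨ψ, hψ⟩ := exists_addChar_ne_one (E := E) hroot hy
  have h : ∑ χ : AddChar G E, (ψ * χ) y = ∑ χ : AddChar G E, χ y :=
    Fintype.sum_equiv (Equiv.mulLeft ψ) _ _ (fun _ => rfl)
  simp only [AddChar.mul_apply, ← Finset.mul_sum] at h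
  have h2 : (ψ y - 1) * ∑ χ : AddChar G E, χ y = 0 := by rw [sub_mul, h]; ring
  exact (mul_eq_zero.mp h2).resolve_left (sub_ne_zero.mpr hψ)

theorem fourier_inversion_aux {G E : Type*} [AddCommGroup G] [Fintype G] [Field E]
    [Fintype (AddChar G E)]
    (hroot : ∃ ζ : E, IsPrimitiveRoot ζ (AddMonoid.exponent G)) (f : G → E) (y : G) :
    ∑ χ : AddChar G E, fourierTransform f χ * χ y = (Fintype.card (AddChar G E) : E) * f y := by
  classical
  simp only [fourierTransform, Finset.sum_mul]
  rw [Finset.sum_comm, Finset.sum_eq_single y]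
  · have : ∀ χ : AddChar G E, f y * χ (-y) * χ y = f y := fun χ => by
      rw [mul_assoc, ← AddChar.map_add_eq_mul]; simp
    simp [this]
  · intro z _ hz
    have : ∀ χ : AddChar G E, f z * χ (-z) * χ y = f z * χ (-z + y) := fun χ => by
      rw [mul_assoc, ← AddChar.map_add_eq_mul]
    simp only [this, ← Finset.mul_sum]
    rw [sum_addChar_eq_zero hroot, mul_zero]
    intro h
    exact hz (neg_add_eq_zero.mp h)
  · simp

theorem card_addChar_ne_zero {G E : Type*} [AddCommGroup G] [Fintype G] [Field E]
    [Fintype (AddChar G E)]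
    (hchar : (Fintype.card G : E) ≠ 0)
    (hroot : ∃ ζ : E, IsPrimitiveRoot ζ (AddMonoid.exponent G)) :
    (Fintype.card (AddChar G E) : E) ≠ 0 := by
  classical
  intro h0
  -- inversion applied to the constant function one, whose transform is card G at the trivial character
  have h := fourier_inversion_aux hroot (fun _ : G => (1 : E)) 0
  rw [h0, zero_mul, Finset.sum_eq_single (1 : AddChar G E)] at h
  · simp [fourierTransform] at h
    exact hchar h
  · intro χ _ hχ
    have : fourierTransform (fun _ : G => (1 : E)) χ = 0 := by
      simp only [fourierTransform, one_mul]
      rw [Fintype.sum_equiv (Equiv.neg G) (fun x => χ (-x)) (fun x => χ x) (fun _ => rfl)]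
      exact AddChar.sum_eq_zero_of_ne_one hχ
    rw [this, zero_mul]
  · simp

/-- if `x₁, …, x_t` is a sequence in `G` such that each translate
`x_i + supp f` is not contained in the union of the previous translates, then
`|supp f̂| ≥ t`. -/
theorem stmt_4 {G E : Type*} [AddCommGroup G] [Fintype G] [Field E]
    (hchar : (Fintype.card G : E) ≠ 0)
    (hroot : ∃ ζ : E, IsPrimitiveRoot ζ (AddMonoid.exponent G))
    (f : G → E) (hf : f ≠ 0)
    {t : ℕ} (x : Fin t → G)
    (hseq : ∀ i : Fin t, 0 < i.val →
      ¬ ((fun s => x i + s) '' Function.support f ⊆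
          ⋃ j < i, (fun s => x j + s) '' Function.support f)) :
    t ≤ (Function.support (fourierTransform f)).ncard := by
  classical
  have : Finite (AddChar G E) := finite_addChar'
  have : Fintype (AddChar G E) := Fintype.ofFinite _
  have hcard := card_addChar_ne_zero (E := E) hchar hroot
  have key : ∀ i : Fin t, ∃ y : G, f (y - x i) ≠ 0 ∧ ∀ j < i, f (y - x j) = 0 := by
    intro i
    by_cases hi : 0 < i.val
    · obtain ⟨y, hy, hy'⟩ := Set.not_subset.mp (hseq i hi)
      obtain ⟨s, hs, rfl⟩ := hy
      refine ⟨x i + s, by simpa using hs, fun j hj => ?_⟩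
      by_contra hne
      apply hy'
      simp only [Set.mem_iUnion]
      exact ⟨j, hj, _, hne, by simp⟩
    · obtain ⟨s, hs⟩ := Function.ne_iff.mp hf
      refine ⟨x i + s, by simpa using hs, fun j hj => ?_⟩
      have : j.val < i.val := hj
      omega
  choose y hy hy' using key
  have hli : LinearIndependent E (fun (i : Fin t) (z : G) => f (z - x i)) := by
    rw [Fintype.linearIndependent_iff]
    intro c hc i
    induction i using WellFoundedGT.induction with
    | ind i ih =>
      have h := congrFun hc (y i)
      simp only [Finset.sum_apply, Pi.smul_apply, smul_eq_mul, Pi.zero_apply] at h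
      rw [Finset.sum_eq_single i] at h
      · exact (mul_eq_zero.mp h).resolve_right (hy i)
      · intro j _ hj
        rcases lt_or_gt_of_ne hj with hlt | hgt
        · rw [hy' i j hlt, mul_zero]
        · rw [ih j hgt, zero_mul]
      · simp
  set F : Finset (AddChar G E) := (Function.support (fourierTransform f)).toFinset with hF
  let W : Finset (G → E) := F.image (fun χ : AddChar G E => (χ : G → E))
  have hspan : Set.range (fun (i : Fin t) (z : G) => f (z - x i)) ⊆
      Submodule.span E (W : Set (G → E)) := by
    rintro _ ⟨i, rfl⟩
    have : (fun z : G => f (z - x i)) = ∑ χ ∈ F,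
        ((Fintype.card (AddChar G E) : E)⁻¹ * fourierTransform f χ * χ (-x i)) • (χ : G → E) := by
      funext z
      have h := fourier_inversion_aux hroot f (z - x i)
      rw [Finset.sum_apply]
      rw [← Finset.sum_subset (Finset.subset_univ F)] at h
      · rw [eq_comm, mul_comm, ← eq_mul_inv_iff_mul_eq₀ hcard] at h
        rw [h, Finset.sum_mul]
        refine Finset.sum_congr rfl fun χ _ => ?_
        rw [sub_eq_add_neg, AddChar.map_add_eq_mul, Pi.smul_apply, smul_eq_mul]
        ring
      · intro χ _ hχ
        have : fourierTransform f χ = 0 := by simpa [hF] using hχ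
        rw [this, zero_mul]
    simp only [this]
    refine Submodule.sum_mem _ fun χ hχ => Submodule.smul_mem _ _ (Submodule.subset_span ?_)
    exact Finset.mem_coe.mpr (Finset.mem_image_of_mem _ hχ)
  have h1 := linearIndependent_le_span_aux' _ hli (W : Set (G → E)) hspan
  have h2 : W.card ≤ F.card := Finset.card_image_le
  rw [Set.ncard_eq_toFinset_card']
  have h3 : t ≤ W.card := by simpa using h1
  exact h3.trans h2
end

section
/- Let (K,+) be a finite abelian group, Z a proper subset of K, and N = K \ Z (so N is nonempty). Then there exists a Z-independent sequence α_1, …, α_t of distinct elements of K whose length t satisfies t·|N| ≥ |K|, i.e., t ≥ |K|/(|K| − |Z|). -/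
open Function Set

/-- A sequence `α₁, …, α_t` in `K` is `Z`-independent if there are `ψ₁, …, ψ_t` in `K`
with `ψ_i + α_i ∉ Z` for all `i` and `ψ_i + α_j ∈ Z` for all `j < i`. -/
def ZIndepSeq {K : Type*} [AddCommGroup K] (Z : Set K) {t : ℕ} (α : Fin t → K) : Prop :=
  ∃ ψ : Fin t → K, (∀ i, ψ i + α i ∉ Z) ∧ ∀ i j : Fin t, j < i → ψ i + α j ∈ Z

theorem zindep_injective {K : Type*} [AddCommGroup K] (Z : Set K) {t : ℕ} (α : Fin t → K)
    (h : ZIndepSeq Z α) : Function.Injective α := by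
  obtain ⟨ψ, h1, h2⟩ := h
  intro i j hij
  rcases lt_trichotomy i j with h | h | h
  · exact absurd (hij ▸ h2 j i h) (h1 j)
  · exact h
  · exact absurd (hij ▸ h2 i j h) (hij ▸ h1 i)

theorem exists_psi {K : Type*} [AddCommGroup K] [Fintype K] (Z : Set K) {t : ℕ} (α : Fin t → K)
    (h : t * (Zᶜ).ncard < Fintype.card K) : ∃ ψ : K, ∀ j, ψ + α j ∈ Z := by
  classical
  by_contra hc
  push Not at hc
  choose f hf using hc
  have hinj : Function.Injective
      (fun x : K => ((f x, ⟨x + α (f x), hf x⟩) : Fin t × (Zᶜ : Set K))) := by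
    intro x y hxy
    simp only [Prod.mk.injEq, Subtype.mk.injEq] at hxy
    obtain ⟨h1, h2⟩ := hxy
    rw [h1] at h2
    exact add_right_cancel h2
  have := Nat.card_le_card_of_injective _ hinj
  rw [Nat.card_prod, Nat.card_eq_fintype_card, Nat.card_eq_fintype_card, Fintype.card_fin,
    Nat.card_coe_set_eq] at this
  omega

theorem greedy {K : Type*} [AddCommGroup K] [Fintype K]
    (Z : Set K) (hZ : Z ≠ Set.univ) (t : ℕ) :
    (∃ (t : ℕ) (α : Fin t → K), ZIndepSeq Z α ∧ Fintype.card K ≤ t * (Zᶜ).ncard) ∨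
      ∃ α : Fin t → K, ZIndepSeq Z α := by
  obtain ⟨n, hn⟩ := (Set.ne_univ_iff_exists_notMem Z).1 hZ
  induction t with
  | zero => exact Or.inr ⟨Fin.elim0, Fin.elim0, fun i => i.elim0, fun i => i.elim0⟩
  | succ t ih =>
    rcases ih with h | ⟨α, hα⟩
    · exact Or.inl h
    by_cases hc : Fintype.card K ≤ t * (Zᶜ).ncard
    · exact Or.inl ⟨t, α, hα, hc⟩
    obtain ⟨p, hp⟩ := exists_psi Z α (not_le.1 hc)
    obtain ⟨ψ, h1, h2⟩ := hα
    refine Or.inr ⟨Fin.snoc (α := fun _ => K) α (n - p), Fin.snoc (α := fun _ => K) ψ p, ?_, ?_⟩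
    · intro i
      refine Fin.lastCases ?_ (fun i => ?_) i
      · simpa using hn
      · simpa using h1 i
    · intro i j
      refine Fin.lastCases ?_ (fun i => ?_) i
      · refine Fin.lastCases ?_ (fun j => ?_) j
        · simp
        · intro _
          simpa using hp j
      · refine Fin.lastCases ?_ (fun j => ?_) j
        · intro h
          exact absurd h (not_lt.2 (Fin.le_last _))
        · intro h
          simpa using h2 i j (by simpa using h)

/-- if `Z` is a proper subset of `K` and `N = K \ Z`, then there is a
`Z`-independent sequence of distinct elements of length `t` with `t·|N| ≥ |K|`. -/
theorem stmt_6 {K : Type*} [AddCommGroup K] [Fintype K]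
    (Z : Set K) (hZ : Z ≠ Set.univ) :
    ∃ (t : ℕ) (α : Fin t → K), Function.Injective α ∧ ZIndepSeq Z α ∧
      Fintype.card K ≤ t * (Zᶜ).ncard := by
  rcases greedy Z hZ (Fintype.card K) with ⟨t, α, h, h'⟩ | ⟨α, h⟩
  · exact ⟨t, α, zindep_injective Z α h, h, h'⟩
  · refine ⟨_, α, zindep_injective Z α h, h, Nat.le_mul_of_pos_right _ ?_⟩
    rw [Set.ncard_pos]
    exact Set.nonempty_compl.2 hZ
end

section
/- Let (G,+) be a finite abelian group and E a field of characteristic 0 or of characteristic p not dividing |G| containing a primitive N-th root of unity, N = exp(G). Let Ĝ be the group of E-valued characters of G, let K be a subgroup of Ĝ, and let f : G → E be a function whose Fourier transform f̂ is nonzero at some character of K. Then |supp(f)| · |supp(f̂) ∩ K| ≥ |K|. -/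
open Function Set

/-- generalized Donoho–Stark for a subgroup `K` of the character group:
if `f̂` is nonzero at some character of `K`, then `|supp f|·|supp f̂ ∩ K| ≥ |K|`. -/
theorem stmt_9 {G E : Type*} [AddCommGroup G] [Fintype G] [Field E]
    (hchar : (Fintype.card G : E) ≠ 0)
    (hroot : ∃ ζ : E, IsPrimitiveRoot ζ (AddMonoid.exponent G))
    (f : G → E) (K : Subgroup (AddChar G E))
    (hne : ∃ χ ∈ K, fourierTransform f χ ≠ 0) :
    (K : Set (AddChar G E)).ncard ≤
      (Function.support f).ncard *
        (Function.support (fourierTransform f) ∩ (K : Set (AddChar G E))).ncard := by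
  classical
  by_cases hK : (K : Set (AddChar G E)).Finite
  swap
  · rw [Set.Infinite.ncard hK]; exact Nat.zero_le _
  have : Finite K := hK
  obtain ⟨χ₀, hχ₀, hne⟩ := hne
  -- translates of the restricted transform
  let τ : K → (K → E) := fun ψ χ => fourierTransform f (ψ * χ : AddChar G E)
  let S : Finset G := Finset.univ.filter (fun x => f x ≠ 0)
  have hS : (Function.support f).ncard = S.card := by
    rw [← Set.ncard_coe_finset]; congr 1; ext x; simp [S]
  let e : G → (K → E) := fun x χ => (χ : AddChar G E) (-x)
  have hle : Submodule.span E (Set.range τ) ≤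
      Submodule.span E ((S.image e : Finset (K → E)) : Set (K → E)) := by
    rw [Submodule.span_le]
    rintro _ ⟨ψ, rfl⟩
    have : τ ψ = ∑ x ∈ S, (f x * (ψ : AddChar G E) (-x)) • e x := by
      ext χ
      simp only [τ, e, S, fourierTransform, AddChar.mul_apply, Finset.sum_apply, Pi.smul_apply,
        smul_eq_mul, mul_assoc]
      rw [Finset.sum_filter]
      refine Finset.sum_congr rfl fun x _ => ?_
      by_cases h : f x = 0 <;> simp [h]
    rw [this]
    exact Submodule.sum_mem _ fun x hx => Submodule.smul_mem _ _
      (Submodule.subset_span (Finset.mem_coe.2 (Finset.mem_image_of_mem e hx)))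
  have hdim : Module.finrank E (Submodule.span E (Set.range τ)) ≤ S.card :=
    (Submodule.finrank_mono hle).trans
      ((finrank_span_finset_le_card _).trans Finset.card_image_le)
  obtain ⟨b, hb, hspan, -⟩ := Submodule.exists_fun_fin_finrank_span_eq E (Set.range τ)
  choose c hc using hb
  set T := Function.support (fourierTransform f) ∩ (K : Set (AddChar G E)) with hT
  have hcover : (K : Set (AddChar G E)) ⊆
      ⋃ i ∈ (Finset.univ : Finset (Fin (Module.finrank E (Submodule.span E (Set.range τ))))),
        (fun t => ((c i : AddChar G E))⁻¹ * t) '' T := by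
    intro χ hχ
    by_contra hcon
    simp only [Finset.mem_univ, Set.iUnion_true, Set.mem_iUnion, not_exists] at hcon
    have hz : ∀ i, b i ⟨χ, hχ⟩ = 0 := by
      intro i
      by_contra h0
      refine hcon i ⟨c i * χ, ⟨?_, K.mul_mem (c i).2 hχ⟩, by simp⟩
      rw [← hc i] at h0
      exact h0
    have hsub : Submodule.span E (Set.range τ) ≤
        LinearMap.ker (LinearMap.proj (R := E) (φ := fun _ : K => E) ⟨χ, hχ⟩) := by
      rw [← hspan, Submodule.span_le]
      rintro _ ⟨i, rfl⟩
      exact hz i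
    have h1 := hsub (Submodule.subset_span ⟨⟨χ₀ * χ⁻¹, K.mul_mem hχ₀ (K.inv_mem hχ)⟩, rfl⟩)
    apply hne
    simpa [τ] using h1
  have hTf : T.Finite := hK.subset Set.inter_subset_right
  calc (K : Set (AddChar G E)).ncard
      ≤ _ := Set.ncard_le_ncard hcover
        (Set.Finite.biUnion (Finset.finite_toSet _) fun i _ => hTf.image _)
    _ ≤ ∑ i, ((fun t => ((c i : AddChar G E))⁻¹ * t) '' T).ncard :=
        Finset.set_ncard_biUnion_le _ _
    _ ≤ ∑ i : Fin (Module.finrank E (Submodule.span E (Set.range τ))), T.ncard :=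
        Finset.sum_le_sum fun i _ => Set.ncard_image_le hTf
    _ = Module.finrank E (Submodule.span E (Set.range τ)) * T.ncard := by simp
    _ ≤ _ := by rw [hS]; exact Nat.mul_le_mul_right _ hdim
end

section
/- Let (G,+) be a finite abelian group and E a field of characteristic 0 or of characteristic p not dividing |G| containing a primitive N-th root of unity, N = exp(G). Let Ĝ be the group of E-valued characters of G, let K be a subgroup of Ĝ, and let f : G → E be a function whose Fourier transform f̂ is nonzero at some character of K. If |supp(f)| · |supp(f̂) ∩ K| = |K|, then supp(f̂) ∩ K is a coset of a subgroup of K. -/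
open Function Set

/-- Filling argument: translates outside `U` increase the dimension. -/
lemma stmt10_fill {C E : Type*} [CommGroup C] [Finite C] [Field E] (g : C → E)
    (hg : ∃ x, g x ≠ 0) (V : Submodule E (C → E))
    (hV : ∀ a : C, (fun x => g (a * x)) ∈ V) (n : ℕ) :
    ∀ (W : Submodule E (C → E)) (U : Set C), W ≤ V →
      (∀ w ∈ W, ∀ x, x ∉ U → w x = 0) →
      Module.finrank E V ≤ Module.finrank E W + n →
      (Uᶜ).ncard ≤ n * (support g).ncard := by
  have := Fintype.ofFinite C
  obtain ⟨t, ht⟩ := hg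
  induction n with
  | zero =>
    intro W U hWV hW hd
    have hEq : W = V := Submodule.eq_of_le_of_finrank_le hWV (by simpa using hd)
    have : Uᶜ = ∅ := by
      ext k
      simp only [Set.mem_compl_iff, Set.mem_empty_iff_false, iff_false, not_not]
      by_contra hk
      have := hW _ (hEq ▸ hV (t * k⁻¹)) k hk
      simp at this
      exact ht this
    simp [this]
  | succ n ih =>
    intro W U hWV hW hd
    by_cases hU : ∃ k, k ∉ U
    · obtain ⟨k, hk⟩ := hU
      set h : C → E := fun x => g (t * k⁻¹ * x) with hh
      have hhk : h k ≠ 0 := by simpa [hh] using ht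
      have hnot : h ∉ W := fun hm => hhk (hW h hm k hk)
      have hlt : W < W ⊔ Submodule.span E {h} := by
        refine lt_of_le_of_ne le_sup_left fun e => hnot ?_
        rw [e]
        exact Submodule.mem_sup_right (Submodule.mem_span_singleton_self h)
      have hfin := Submodule.finrank_lt_finrank_of_lt hlt
      have key := ih (W ⊔ Submodule.span E {h}) (U ∪ support h)
        (sup_le hWV (by
          rw [Submodule.span_singleton_le_iff_mem]
          exact hV _))
        (by
          intro w hw x hx
          obtain ⟨y, hy, z, hz, rfl⟩ := Submodule.mem_sup.1 hw
          obtain ⟨c, rfl⟩ := Submodule.mem_span_singleton.1 hz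
          simp only [Set.mem_union, not_or, mem_support, not_not] at hx
          simp [hW y hy x hx.1, hx.2])
        (by omega)
      have hcard : (support h).ncard = (support g).ncard := by
        have : support h = (fun x => t * k⁻¹ * x) ⁻¹' support g := rfl
        rw [this, Set.ncard_preimage_of_injective_subset_range (mul_right_injective _)]
        intro y _
        exact ⟨(t * k⁻¹)⁻¹ * y, mul_inv_cancel_left _ _⟩
      have hsub : Uᶜ ⊆ (U ∪ support h)ᶜ ∪ support h := by
        intro x hx
        by_cases hx2 : x ∈ support h
        · exact Or.inr hx2
        · exact Or.inl (by simp only [Set.mem_compl_iff, Set.mem_union, not_or]; exact ⟨hx, hx2⟩)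
      have h1 := Set.ncard_le_ncard hsub (Set.toFinite _)
      have h2 := Set.ncard_union_le (U ∪ support h)ᶜ (support h)
      rw [Nat.add_mul, one_mul]
      omega
    · push Not at hU
      have : Uᶜ = ∅ := by
        ext k
        simp [hU k]
      simp [this]

/-- Two translates of the support are equal or disjoint. -/
lemma stmt10_disj {C E : Type*} [CommGroup C] [Finite C] [Field E] (g : C → E)
    (hg : ∃ x, g x ≠ 0) (V : Submodule E (C → E))
    (hV : ∀ a : C, (fun x => g (a * x)) ∈ V)
    (hcard : Module.finrank E V * (support g).ncard ≤ Nat.card C)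
    (a k : C) (hk : g (a * k) ≠ 0) (hk0 : g k = 0) (y : C) (hy : g y ≠ 0) :
    g (a * y) = 0 := by
  have := Fintype.ofFinite C
  by_contra hay
  set h : C → E := fun x => g (a * x) with hh
  have hgV : g ∈ V := by simpa using hV 1
  have hlt : Submodule.span E {g} < Submodule.span E {g} ⊔ Submodule.span E {h} := by
    refine lt_of_le_of_ne le_sup_left fun e => ?_
    have : h ∈ Submodule.span E {g} := by
      rw [e]
      exact Submodule.mem_sup_right (Submodule.mem_span_singleton_self h)
    obtain ⟨c, hc⟩ := Submodule.mem_span_singleton.1 this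
    have := congrFun hc k
    simp [hk0, hh] at this
    exact hk this.symm
  have hfin := Submodule.finrank_lt_finrank_of_lt hlt
  have hg0 : g ≠ 0 := by
    rintro rfl
    exact hy rfl
  rw [finrank_span_singleton hg0] at hfin
  have hle : Submodule.span E {g} ⊔ Submodule.span E {h} ≤ V := by
    refine sup_le ?_ ?_ <;> rw [Submodule.span_singleton_le_iff_mem]
    · exact hgV
    · exact hV a
  have hfV := Submodule.finrank_mono hle
  obtain ⟨n, hn⟩ : ∃ n, Module.finrank E V = n + 2 := ⟨Module.finrank E V - 2, by omega⟩
  have key := stmt10_fill g hg V hV n _ (support g ∪ support h) hle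
    (by
      intro w hw x hx
      obtain ⟨y, hy, z, hz, rfl⟩ := Submodule.mem_sup.1 hw
      obtain ⟨c, rfl⟩ := Submodule.mem_span_singleton.1 hz
      obtain ⟨d, rfl⟩ := Submodule.mem_span_singleton.1 hy
      simp only [Set.mem_union, not_or, mem_support, not_not] at hx
      simp [hx.1, hx.2])
    (by omega)
  have hch : (support h).ncard = (support g).ncard := by
    have : support h = (fun x => a * x) ⁻¹' support g := rfl
    rw [this, Set.ncard_preimage_of_injective_subset_range (mul_right_injective _)]
    intro y _
    exact ⟨a⁻¹ * y, by simp⟩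
  have h1 := Set.ncard_union_add_ncard_inter (support g) (support h)
  have h2 := Set.ncard_add_ncard_compl (support g ∪ support h)
  have h3 : 0 < (support g ∩ support h).ncard :=
    (Set.ncard_pos (Set.toFinite _)).2 ⟨y, hy, hay⟩
  rw [hn, Nat.add_mul] at hcard
  omega

/-- The support is a coset. -/
lemma stmt10_coset {C E : Type*} [CommGroup C] [Finite C] [Field E] (g : C → E)
    (hg : ∃ x, g x ≠ 0) (V : Submodule E (C → E))
    (hV : ∀ a : C, (fun x => g (a * x)) ∈ V)
    (hcard : Module.finrank E V * (support g).ncard ≤ Nat.card C) :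
    ∃ (L : Subgroup C) (φ : C), ∀ x, g x ≠ 0 ↔ φ⁻¹ * x ∈ L := by
  have D := stmt10_disj g hg V hV hcard
  obtain ⟨φ, hφ⟩ := hg
  -- if `a` moves one point of the support to the support, then it preserves the support
  have P : ∀ a y, g y ≠ 0 → g (a * y) ≠ 0 → ∀ k, g (a * k) ≠ 0 → g k ≠ 0 :=
    fun a y hy hay k hk hk0 => hay (D a k hk hk0 y hy)
  have Q : ∀ a y, g y ≠ 0 → g (a * y) ≠ 0 → ∀ k, g k ≠ 0 → g (a * k) ≠ 0 :=
    fun a y hy hay k hk => P a⁻¹ (a * y) hay (by simpa using hy) (a * k) (by simpa using hk)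
  refine ⟨{ carrier := {a | g (a * φ) ≠ 0}
            mul_mem' := ?_
            one_mem' := by simpa using hφ
            inv_mem' := ?_ }, φ, ?_⟩
  · intro a b ha hb
    have := Q a φ hφ ha (b * φ) hb
    simpa [mul_assoc] using this
  · intro a ha
    exact P a φ hφ ha (a⁻¹ * φ) (by simpa using hφ)
  · intro x
    change _ ↔ g (φ⁻¹ * x * φ) ≠ 0
    rw [mul_right_comm]
    simp

/-- in the generalized Donoho–Stark inequality for a subgroup `K` of the
character group, equality `|supp f|·|supp f̂ ∩ K| = |K|` forces `supp f̂ ∩ K` to be a coset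
of a subgroup of `K`. -/
theorem stmt_10 {G E : Type*} [AddCommGroup G] [Fintype G] [Field E]
    (hchar : (Fintype.card G : E) ≠ 0)
    (hroot : ∃ ζ : E, IsPrimitiveRoot ζ (AddMonoid.exponent G))
    (f : G → E) (K : Subgroup (AddChar G E))
    (hne : ∃ χ ∈ K, fourierTransform f χ ≠ 0)
    (heq : (Function.support f).ncard *
        (Function.support (fourierTransform f) ∩ (K : Set (AddChar G E))).ncard
        = (K : Set (AddChar G E)).ncard) :
    ∃ (L : Subgroup (AddChar G E)) (φ : AddChar G E), L ≤ K ∧ φ ∈ K ∧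
      Function.support (fourierTransform f) ∩ (K : Set (AddChar G E))
        = (fun κ => φ * κ) '' (L : Set (AddChar G E)) := by
  classical
  have hfinK : Finite K := by
    have : Finite (AddChar G E) := by
      have : Finite (Multiplicative G →* E) :=
        (linearIndependent_monoidHom (Multiplicative G) E).finite
      exact Finite.of_equiv _ AddChar.toMonoidHomEquiv.symm
    infer_instance
  set g : K → E := fun κ => fourierTransform f κ.1 with hgdef
  have himg : support (fourierTransform f) ∩ (K : Set (AddChar G E))
      = Subtype.val '' (support g) := by
    ext χ
    simp only [Set.mem_inter_iff, mem_support, SetLike.mem_coe, Set.mem_image, hgdef]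
    constructor
    · rintro ⟨h1, h2⟩
      exact ⟨⟨χ, h2⟩, h1, rfl⟩
    · rintro ⟨y, h1, rfl⟩
      exact ⟨h1, y.2⟩
  have hTc : (support (fourierTransform f) ∩ (K : Set (AddChar G E))).ncard
      = (support g).ncard := by
    rw [himg, Set.ncard_image_of_injective _ Subtype.val_injective]
  let e : support f → (K → E) := fun s κ => κ.1 (-s.1)
  let V : Submodule E (K → E) := Submodule.span E (Set.range e)
  have hdim : Module.finrank E V ≤ (support f).ncard := by
    rw [← Nat.card_coe_set_eq, Nat.card_eq_fintype_card]
    exact finrank_range_le_card e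
  have hV : ∀ a : K, (fun x => g (a * x)) ∈ V := by
    intro a
    have : (fun x => g (a * x)) = ∑ s : support f, (f s.1 * a.1 (-s.1)) • e s := by
      funext x
      simp only [hgdef, fourierTransform, Finset.sum_apply, Pi.smul_apply, smul_eq_mul, e]
      have h0 : ∀ s : G, s ∉ Finset.univ.filter (fun s => s ∈ support f) →
          f s * (a.1 * x.1) (-s) = 0 := by
        intro s hs
        have : f s = 0 := by simpa using hs
        simp [this]
      change ∑ s, f s * (a.1 * x.1) (-s) = _
      rw [← Finset.sum_subset (Finset.subset_univ _) (fun s _ hs => h0 s hs),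
        Finset.sum_subtype (p := fun s => s ∈ support f) _ (by simp)]
      refine Finset.sum_congr rfl fun s _ => ?_
      rw [AddChar.mul_apply, mul_assoc]
    rw [this]
    exact Submodule.sum_mem _ fun s _ => Submodule.smul_mem _ _ (Submodule.subset_span ⟨s, rfl⟩)
  obtain ⟨χ, hχ, hχ0⟩ := hne
  obtain ⟨L, φ, hL⟩ := stmt10_coset g ⟨⟨χ, hχ⟩, hχ0⟩ V hV (by
    rw [hTc] at heq
    have : Nat.card K = (K : Set (AddChar G E)).ncard := Nat.card_coe_set_eq _
    rw [this, ← heq]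
    exact Nat.mul_le_mul_right _ hdim)
  refine ⟨L.map K.subtype, φ.1, ?_, φ.2, ?_⟩
  · rintro _ ⟨y, _, rfl⟩
    exact y.2
  · rw [himg]
    ext ψ
    constructor
    · rintro ⟨x, hx, rfl⟩
      exact ⟨_, ⟨φ⁻¹ * x, (hL x).1 hx, rfl⟩, by simp⟩
    · rintro ⟨_, ⟨y, hy, rfl⟩, rfl⟩
      exact ⟨φ * y, (hL _).2 (by simpa using hy), rfl⟩
end

section
/- Let (G,+) be a finite abelian group and E a field of characteristic 0 or of characteristic p not dividing |G| containing a primitive N-th root of unity, N = exp(G). Then for every nonzero function f : G → E, |supp(f)| · |supp(f̂)| ≥ |G|, where f̂ is the Fourier transform of f. -/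
open Function Set

theorem aux_inv {G E : Type*} [AddCommGroup G] [Fintype G] [Field E] [Fintype (AddChar G E)]
    (hsep : ∀ a : G, a ≠ 0 → ∃ χ : AddChar G E, χ a ≠ 1) (f : G → E) (x : G) :
    ∑ χ : AddChar G E, fourierTransform f χ * χ x = (Fintype.card (AddChar G E) : E) * f x := by
  classical
  have key : ∀ a : G, ∑ χ : AddChar G E, χ a
      = if a = 0 then (Fintype.card (AddChar G E) : E) else 0 := by
    intro a
    split_ifs with h
    · subst h; simp
    · obtain ⟨ψ, hψ⟩ := hsep a h
      have h1 : ψ a * ∑ χ : AddChar G E, χ a = ∑ χ : AddChar G E, χ a := by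
        rw [Finset.mul_sum]
        exact Fintype.sum_equiv (Equiv.mulLeft ψ) _ _ (fun χ => by simp)
      have h2 : (ψ a - 1) * ∑ χ : AddChar G E, χ a = 0 := by
        rw [sub_mul, h1]; ring
      exact (mul_eq_zero.1 h2).resolve_left (sub_ne_zero.2 hψ)
  simp only [fourierTransform, Finset.sum_mul]
  rw [Finset.sum_comm]
  have : ∀ y : G, ∑ χ : AddChar G E, f y * χ (-y) * χ x
      = if y = x then (Fintype.card (AddChar G E) : E) * f x else 0 := by
    intro y
    have : ∀ χ : AddChar G E, f y * χ (-y) * χ x = f y * χ (x - y) := by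
      intro χ
      rw [mul_assoc, ← AddChar.map_add_eq_mul, neg_add_eq_sub]
    simp only [this]
    rw [← Finset.mul_sum, key]
    by_cases h : y = x
    · subst h; simp [mul_comm]
    · rw [if_neg (sub_ne_zero.2 (Ne.symm h)), if_neg h, mul_zero]
  simp only [this]
  simp

/-- the Donoho–Stark uncertainty principle over a field `E` of
characteristic `0` or `p ∤ |G|` containing a primitive `exp(G)`-th root of unity:
`|supp f|·|supp f̂| ≥ |G|` for every nonzero `f : G → E`. -/
theorem stmt_11 {G E : Type*} [AddCommGroup G] [Fintype G] [Field E]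
    (hchar : (Fintype.card G : E) ≠ 0)
    (hroot : ∃ ζ : E, IsPrimitiveRoot ζ (AddMonoid.exponent G))
    (f : G → E) (hf : f ≠ 0) :
    Fintype.card G ≤
      (Function.support f).ncard * (Function.support (fourierTransform f)).ncard := by
  classical
  obtain ⟨ζ, hζ⟩ := hroot
  have : NeZero (Monoid.exponent (Multiplicative G)) :=
    ⟨Monoid.exponent_ne_zero_of_finite⟩
  have : HasEnoughRootsOfUnity E (Monoid.exponent (Multiplicative G)) :=
    { prim := ⟨ζ, by rwa [Monoid.exponent_multiplicative]⟩
      cyc := inferInstance }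
  let e : AddChar G E ≃ (Multiplicative G →* Eˣ) :=
    AddChar.toMonoidHomEquiv.trans MonoidHom.toHomUnitsMulEquiv.toEquiv
  have hcard : Nat.card (AddChar G E) = Nat.card G := by
    rw [Nat.card_congr e, CommGroup.card_monoidHom_of_hasEnoughRootsOfUnity]
    exact Nat.card_congr Multiplicative.toAdd
  have hfin : Finite (AddChar G E) :=
    Nat.finite_of_card_ne_zero (by rw [hcard]; exact Nat.card_pos.ne')
  let _ : Fintype (AddChar G E) := Fintype.ofFinite _
  have hc : (Fintype.card (AddChar G E) : E) ≠ 0 := by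
    rw [← Nat.card_eq_fintype_card, hcard, Nat.card_eq_fintype_card]; exact hchar
  have hsep : ∀ a : G, a ≠ 0 → ∃ χ : AddChar G E, χ a ≠ 1 := by
    intro a ha
    obtain ⟨φ, hφ⟩ := CommGroup.exists_apply_ne_one_of_hasEnoughRootsOfUnity
      (Multiplicative G) E (a := Multiplicative.ofAdd a) (by simpa using ha)
    refine ⟨e.symm φ, fun h => hφ (Units.ext ?_)⟩
    exact h
  have hinv := aux_inv hsep f
  -- translates
  let T : G → G → E := fun t x => f (x - t)
  let S : Finset (AddChar G E) := (Function.support (fourierTransform f)).toFinset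
  let W : Finset (G → E) := S.image (fun χ : AddChar G E => (⇑χ : G → E))
  have hT : ∀ t, T t ∈ Submodule.span E (W : Set (G → E)) := by
    intro t
    have : T t = ∑ χ ∈ S, ((Fintype.card (AddChar G E) : E)⁻¹
        * fourierTransform f χ * χ (-t)) • (χ : G → E) := by
      ext x
      have h1 : f (x - t) = (Fintype.card (AddChar G E) : E)⁻¹ *
          ∑ χ : AddChar G E, fourierTransform f χ * χ (x - t) := by
        rw [hinv, inv_mul_cancel_left₀ hc]
      have h2 : ∑ χ : AddChar G E, fourierTransform f χ * χ (x - t)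
          = ∑ χ ∈ S, fourierTransform f χ * χ (x - t) := by
        symm
        apply Finset.sum_subset (Finset.subset_univ _)
        intro χ _ hχ
        have : fourierTransform f χ = 0 := by simpa [S] using hχ
        rw [this, zero_mul]
      change f (x - t) = _
      rw [h1, h2, Finset.mul_sum, Finset.sum_apply]
      refine Finset.sum_congr rfl fun χ _ => ?_
      rw [Pi.smul_apply, smul_eq_mul, sub_eq_add_neg, AddChar.map_add_eq_mul]
      ring
    rw [this]
    refine Submodule.sum_mem _ fun χ hχ => Submodule.smul_mem _ _ (Submodule.subset_span ?_)
    exact Finset.mem_coe.2 (Finset.mem_image_of_mem (fun χ : AddChar G E => (⇑χ : G → E)) hχ)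
  obtain ⟨b, hb, hspan, hli⟩ := exists_linearIndependent E (Set.range T)
  have hbfin : b.Finite := (Set.finite_range T).subset hb
  let B : Finset (G → E) := hbfin.toFinset
  have hBcard : B.card ≤ S.card := by
    let _ : Fintype b := hbfin.fintype
    have h1 : Fintype.card b ≤ Fintype.card (W : Set (G → E)) := by
      refine linearIndependent_le_span_aux' _ hli (W : Set (G → E)) ?_
      rintro _ ⟨⟨g, hg⟩, rfl⟩
      obtain ⟨t, rfl⟩ := hb hg
      exact hT t
    have h2 : B.card = Fintype.card b := by
      simp [B, Set.Finite.card_toFinset]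
    have h3 : Fintype.card (W : Set (G → E)) = W.card := by simp
    rw [h2]
    exact (h1.trans h3.le).trans Finset.card_image_le
  have hcover : (Finset.univ : Finset G) ⊆
      B.biUnion (fun g => Finset.univ.filter (fun x => g x ≠ 0)) := by
    intro x _
    by_contra hx
    have hx0 : ∀ g ∈ b, g x = 0 := by
      intro g hg
      by_contra h
      exact hx (Finset.mem_biUnion.2 ⟨g, by simpa [B] using hg, by simpa using h⟩)
    have hle : Submodule.span E (Set.range T) ≤ LinearMap.ker (LinearMap.proj x : (G → E) →ₗ[E] E) := by
      rw [← hspan, Submodule.span_le]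
      intro g hg
      exact hx0 g hg
    apply hf
    ext y
    have h := hle (Submodule.subset_span ⟨x - y, rfl⟩)
    have h' : f (x - (x - y)) = 0 := h
    simpa using h'
  have hsupp : ∀ g ∈ B, (Finset.univ.filter (fun x => g x ≠ 0)).card
      ≤ (Function.support f).ncard := by
    intro g hg
    obtain ⟨t, rfl⟩ := hb (by simpa [B] using hg)
    rw [Set.ncard_eq_toFinset_card']
    refine Finset.card_le_card_of_injOn (fun x => x - t) ?_ ?_
    · intro x hx
      simpa [T] using hx
    · intro x _ y _ h
      exact sub_left_injective h
  have hS : S.card = (Function.support (fourierTransform f)).ncard := by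
    rw [Set.ncard_eq_toFinset_card']
  calc Fintype.card G = (Finset.univ : Finset G).card := rfl
    _ ≤ _ := Finset.card_le_card hcover
    _ ≤ B.card * (Function.support f).ncard := Finset.card_biUnion_le_card_mul _ _ _ hsupp
    _ ≤ S.card * (Function.support f).ncard := Nat.mul_le_mul_right _ hBcard
    _ = _ := by rw [hS, mul_comm]
end

section
/- Let (G,+) be a finite abelian group and E a field of characteristic 0 or of characteristic p not dividing |G| containing a primitive N-th root of unity, N = exp(G). A nonzero function f : G → E satisfies |supp(f)| · |supp(f̂)| = |G| if and only if there exist λ ∈ E \ {0}, an E-valued character χ of G, an element a ∈ G, and a subgroup H of G such that f = λ·χ·1_{a+H}, i.e., f(x) = λ·χ(x) for x ∈ a + H and f(x) = 0 otherwise. -/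
open Function Set

namespace DS

variable {G E : Type*} [AddCommGroup G] [Fintype G] [Field E]

lemma linInd : LinearIndependent E (fun χ : AddChar G E => (χ : G → E)) := by
  have h := linearIndependent_monoidHom (Multiplicative G) E
  exact h.comp (AddChar.toMonoidHomEquiv (A := G) (M := E)) (Equiv.injective _)

instance : Finite (AddChar G E) := (linInd (G := G) (E := E)).finite

lemma cardChar (hroot : ∃ ζ : E, IsPrimitiveRoot ζ (AddMonoid.exponent G)) :
    Nat.card (AddChar G E) = Nat.card G := by
  have hexp : Monoid.exponent (Multiplicative G) = AddMonoid.exponent G :=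
    Monoid.exponent_multiplicative
  have : NeZero (Monoid.exponent (Multiplicative G)) :=
    ⟨Monoid.exponent_ne_zero_of_finite⟩
  have : HasEnoughRootsOfUnity E (Monoid.exponent (Multiplicative G)) :=
    { prim := by rw [hexp]; exact hroot
      cyc := rootsOfUnity.isCyclic E _ }
  have h := CommGroup.card_monoidHom_of_hasEnoughRootsOfUnity (Multiplicative G) E
  rw [Nat.card_congr (AddChar.toMonoidHomEquiv (A := G) (M := E)),
    Nat.card_congr (MonoidHom.toHomUnitsMulEquiv (G := Multiplicative G) (M := E)).toEquiv, h]
  exact Nat.card_congr Multiplicative.toAdd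

lemma fourier_inj (hroot : ∃ ζ : E, IsPrimitiveRoot ζ (AddMonoid.exponent G))
    (f : G → E) (h : ∀ χ, fourierTransform f χ = 0) : f = 0 := by
  classical
  have : Fintype (AddChar G E) := Fintype.ofFinite _
  have hc : Fintype.card (AddChar G E) = Module.finrank E (G → E) := by
    rw [Module.finrank_fintype_fun_eq_card, ← Nat.card_eq_fintype_card,
      ← Nat.card_eq_fintype_card, cardChar hroot]
  have hs : Submodule.span E (Set.range (fun χ : AddChar G E => (χ : G → E))) = ⊤ :=
    (linInd (G := G) (E := E)).span_eq_top_of_card_eq_finrank' hc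
  let L : (G → E) →ₗ[E] E :=
    { toFun := fun g => ∑ x, f x * g x
      map_add' := by intro a b; simp [mul_add, Finset.sum_add_distrib]
      map_smul' := by
        intro c a
        simp only [Pi.smul_apply, smul_eq_mul, RingHom.id_apply, Finset.mul_sum]
        exact Finset.sum_congr rfl fun x _ => by ring }
  have hL : L = 0 := by
    apply LinearMap.ext_on_range hs
    intro χ
    have := h (-χ)
    simpa [fourierTransform, L] using this
  funext x
  have : L (Pi.single x 1) = 0 := by rw [hL]; rfl
  simpa [L, Pi.single_apply] using this

/-- Functions whose transform is supported in the support of that of `f`. -/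
def V (f : G → E) : Submodule E (G → E) where
  carrier := {g | ∀ χ, fourierTransform f χ = 0 → fourierTransform g χ = 0}
  add_mem' := by
    intro a b ha hb χ h
    have h1 := ha χ h
    have h2 := hb χ h
    simp only [fourierTransform] at h1 h2 ⊢
    simp [add_mul, Finset.sum_add_distrib, h1, h2]
  zero_mem' := by intro χ _; simp [fourierTransform]
  smul_mem' := by
    intro c a ha χ h
    have h1 := ha χ h
    simp only [fourierTransform] at h1 ⊢
    simp [mul_assoc, ← Finset.mul_sum, h1]

lemma finrank_V (hroot : ∃ ζ : E, IsPrimitiveRoot ζ (AddMonoid.exponent G)) (f : G → E) :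
    Module.finrank E (V f) ≤ (Function.support (fourierTransform f)).ncard := by
  classical
  have : Fintype (AddChar G E) := Fintype.ofFinite _
  let L : V f →ₗ[E] (Function.support (fourierTransform f) → E) :=
    { toFun := fun g χ => fourierTransform g.1 χ.1
      map_add' := by
        intro a b; funext χ; simp [fourierTransform, add_mul, Finset.sum_add_distrib]
      map_smul' := by
        intro c a; funext χ
        simp [fourierTransform, Finset.mul_sum, mul_assoc] }
  have hL : Function.Injective L := by
    rw [injective_iff_map_eq_zero]
    intro g hg
    apply Subtype.ext
    apply fourier_inj hroot
    intro χ
    by_cases h : fourierTransform f χ = 0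
    · exact g.2 χ h
    · exact congrFun hg ⟨χ, h⟩
  have := LinearMap.finrank_le_finrank_of_injective hL
  rwa [Module.finrank_fintype_fun_eq_card, ← Nat.card_eq_fintype_card,
    Nat.card_coe_set_eq] at this

lemma fourier_shift (f : G → E) (y : G) (χ : AddChar G E) :
    fourierTransform (fun x => f (x - y)) χ = χ (-y) * fourierTransform f χ := by
  simp only [fourierTransform, Finset.mul_sum]
  rw [← Equiv.sum_comp (Equiv.addRight y)]
  refine Finset.sum_congr rfl fun x _ => ?_
  simp only [Equiv.coe_addRight, add_sub_cancel_right, neg_add, AddChar.map_add_eq_mul]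
  ring

lemma shift_mem (f : G → E) (y : G) : (fun x => f (x - y)) ∈ V f := by
  intro χ h
  rw [fourier_shift, h, mul_zero]

/-- Elements of `V f` supported on `U`. -/
def W (f : G → E) (U : Set G) : Submodule E (G → E) where
  carrier := {g | g ∈ V f ∧ ∀ x, x ∉ U → g x = 0}
  add_mem' := by
    intro a b ha hb
    exact ⟨add_mem ha.1 hb.1, fun x hx => by simp [ha.2 x hx, hb.2 x hx]⟩
  zero_mem' := ⟨zero_mem _, fun _ _ => rfl⟩
  smul_mem' := by
    intro c a ha
    exact ⟨(V f).smul_mem c ha.1, fun x hx => by simp [ha.2 x hx]⟩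

lemma supp_shift (f : G → E) (y : G) :
    (Function.support (fun x => f (x - y))).ncard = (Function.support f).ncard := by
  have : Function.support (fun x => f (x - y)) = (fun x => x + y) '' Function.support f := by
    ext x
    simp only [Function.mem_support, Set.mem_image]
    constructor
    · intro h; exact ⟨x - y, h, by simp⟩
    · rintro ⟨z, hz, rfl⟩; simpa using hz
  rw [this, Set.ncard_image_of_injective _ (add_left_injective y)]

lemma greedy (f : G → E) (hf : f ≠ 0) : ∀ (n : ℕ) (U : Set G), Uᶜ.ncard ≤ n →
    Module.finrank E (W f U) * (Function.support f).ncard + Uᶜ.ncard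
      ≤ Module.finrank E (V f) * (Function.support f).ncard := by
  obtain ⟨a, ha⟩ := Function.ne_iff.mp hf
  simp only [Pi.zero_apply] at ha
  intro n
  induction n with
  | zero =>
    intro U hU
    have hU0 : Uᶜ.ncard = 0 := by omega
    rw [hU0, add_zero]
    exact Nat.mul_le_mul_right _ (Submodule.finrank_mono fun g hg => hg.1)
  | succ n ih =>
    intro U hU
    by_cases hU0 : Uᶜ.ncard = 0
    · exact ih U (by omega)
    have hne : Uᶜ.Nonempty := Set.nonempty_of_ncard_ne_zero hU0
    obtain ⟨g, hg⟩ := hne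
    set y := g - a with hy
    set U' := U ∪ Function.support (fun x => f (x - y)) with hU'
    have hgm : g ∈ Function.support (fun x => f (x - y)) := by
      simp only [Function.mem_support, hy, sub_sub_cancel]; exact ha
    have hlt : W f U < W f U' := by
      rw [SetLike.lt_iff_le_and_exists]
      refine ⟨fun k hk => ⟨hk.1, fun x hx => hk.2 x fun h => hx (Or.inl h)⟩,
        fun x => f (x - y), ⟨shift_mem f y, fun x hx => ?_⟩, fun h => hgm (h.2 g hg)⟩
      by_contra h
      exact hx (Or.inr h)
    have hfr := Submodule.finrank_lt_finrank_of_lt hlt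
    have hc1 : U'ᶜ.ncard < Uᶜ.ncard := by
      apply Set.ncard_lt_ncard _ (Set.toFinite _)
      rw [Set.ssubset_iff_of_subset (Set.compl_subset_compl.mpr Set.subset_union_left)]
      exact ⟨g, hg, fun h => h (Or.inr hgm)⟩
    have hc2 : Uᶜ.ncard ≤ U'ᶜ.ncard + (Function.support f).ncard := by
      rw [← supp_shift f y]
      refine le_trans (Set.ncard_le_ncard ?_ (Set.toFinite _)) (Set.ncard_union_le _ _)
      intro x hx
      by_cases h : x ∈ Function.support (fun x => f (x - y))
      · exact Or.inr h
      · exact Or.inl fun h' => h'.elim hx h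
    have := ih U' (by omega)
    have h2 : (Module.finrank E (W f U) + 1) * (Function.support f).ncard ≤
        Module.finrank E (W f U') * (Function.support f).ncard :=
      Nat.mul_le_mul_right _ hfr
    rw [add_mul, one_mul] at h2
    omega

lemma uncertainty (hroot : ∃ ζ : E, IsPrimitiveRoot ζ (AddMonoid.exponent G))
    (f : G → E) (hf : f ≠ 0) :
    Fintype.card G ≤
      (Function.support f).ncard * (Function.support (fourierTransform f)).ncard := by
  have h := greedy f hf _ ∅ le_rfl
  rw [Set.compl_empty, Set.ncard_univ, Nat.card_eq_fintype_card] at h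
  have h2 := Nat.mul_le_mul_right (Function.support f).ncard (finrank_V hroot f)
  rw [mul_comm]
  omega

lemma dependent (hroot : ∃ ζ : E, IsPrimitiveRoot ζ (AddMonoid.exponent G))
    (f : G → E) (hf : f ≠ 0)
    (heq : (Function.support f).ncard * (Function.support (fourierTransform f)).ncard
        = Fintype.card G) (y z : G) (h1 : f z ≠ 0) (h2 : f (z - y) ≠ 0) :
    ∃ c : E, c • f = fun x => f (x - y) := by
  by_contra! hcon
  set U := Function.support f ∪ Function.support (fun x => f (x - y)) with hU
  have hm1 : f ∈ W f U :=
    ⟨fun _ h => h, fun x hx => by by_contra h; exact hx (Or.inl h)⟩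
  have hm2 : (fun x => f (x - y)) ∈ W f U :=
    ⟨shift_mem f y, fun x hx => by by_contra h; exact hx (Or.inr h)⟩
  have hli : LinearIndependent E ![(⟨f, hm1⟩ : W f U), ⟨_, hm2⟩] := by
    rw [LinearIndependent.pair_iff' (by simpa [Subtype.ext_iff] using hf)]
    intro c hc
    exact hcon c (congrArg Subtype.val hc)
  have hfr := hli.fintype_card_le_finrank
  rw [Fintype.card_fin] at hfr
  have hg := greedy f hf _ U le_rfl
  have hV := Nat.mul_le_mul_right (Function.support f).ncard (finrank_V hroot f)
  have h3 := Nat.mul_le_mul_right (Function.support f).ncard hfr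
  have h4 := Set.ncard_union_add_ncard_inter (Function.support f)
    (Function.support (fun x => f (x - y)))
  rw [supp_shift, ← hU] at h4
  have h5 : 0 < (Function.support f ∩ Function.support (fun x => f (x - y))).ncard :=
    (Set.ncard_pos (Set.toFinite _)).mpr ⟨z, h1, h2⟩
  have h6 := Set.ncard_add_ncard_compl U
  rw [Nat.card_eq_fintype_card, ← heq, mul_comm] at h6
  omega

end DS

/-- equality in the Donoho–Stark uncertainty principle holds iff
`f = λ·χ·1_{a+H}` for some nonzero `λ`, character `χ`, element `a ∈ G` and subgroup `H`. -/
theorem stmt_12 {G E : Type*} [AddCommGroup G] [Fintype G] [Field E]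
    (hchar : (Fintype.card G : E) ≠ 0)
    (hroot : ∃ ζ : E, IsPrimitiveRoot ζ (AddMonoid.exponent G))
    (f : G → E) (hf : f ≠ 0) :
    (Function.support f).ncard * (Function.support (fourierTransform f)).ncard
        = Fintype.card G ↔
      ∃ (l : E) (χ : AddChar G E) (a : G) (H : AddSubgroup G), l ≠ 0 ∧
        (∀ x : G, x - a ∈ H → f x = l * χ x) ∧ (∀ x : G, x - a ∉ H → f x = 0) := by
  constructor
  · intro heq
    obtain ⟨a, ha⟩ := Function.ne_iff.mp hf
    simp only [Pi.zero_apply] at ha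
    obtain ⟨χ, hχ⟩ : ∃ χ, fourierTransform f χ ≠ 0 := by
      by_contra! h
      exact hf (DS.fourier_inj hroot f h)
    let H : AddSubgroup G :=
      { carrier := {y | ∀ x, f (x - y) = χ (-y) * f x}
        zero_mem' := by intro x; simp
        add_mem' := by
          intro y z hy hz x
          have h1 := hz (x - y)
          rw [hy x] at h1
          rw [← sub_sub, h1, neg_add, AddChar.map_add_eq_mul]
          ring
        neg_mem' := by
          intro y hy x
          have h1 := hy (x + y)
          rw [add_sub_cancel_right] at h1
          rw [h1, sub_neg_eq_add, ← mul_assoc, ← AddChar.map_add_eq_mul]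
          simp }
    refine ⟨χ (-a) * f a, χ, a, H, mul_ne_zero (χ.val_isUnit _).ne_zero ha, ?_, ?_⟩
    · intro x hx
      have h1 := hx x
      rw [sub_sub_cancel] at h1
      have h3 : χ (-a) * χ (-(x - a)) * χ x = 1 := by
        rw [← AddChar.map_add_eq_mul, ← AddChar.map_add_eq_mul,
          show -a + -(x - a) + x = 0 by abel, AddChar.map_zero_eq_one]
      rw [h1]
      linear_combination (-f x) * h3
    · intro x hx
      by_contra hfx
      apply hx
      obtain ⟨c, hc⟩ := DS.dependent hroot f hf heq (x - a) x hfx (by simpa using ha)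
      have h1 := DS.fourier_shift f (x - a) χ
      rw [← hc] at h1
      have h2 : fourierTransform (c • f) χ = c * fourierTransform f χ := by
        simp [fourierTransform, Finset.mul_sum, mul_assoc]
      rw [h2] at h1
      have h3 := mul_right_cancel₀ hχ h1
      intro z
      rw [← h3]
      exact (congrFun hc z).symm
  · rintro ⟨l, χ, a, H, hl, h1, h2⟩
    apply le_antisymm _ (DS.uncertainty hroot f hf)
    have hS : (Function.support f).ncard = Nat.card H := by
      have : Function.support f = (fun x => x + a) '' (H : Set G) := by
        ext x
        simp only [Function.mem_support, Set.mem_image, SetLike.mem_coe]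
        constructor
        · intro h
          exact ⟨x - a, by_contra fun h' => h (h2 x h'), by simp⟩
        · rintro ⟨z, hz, rfl⟩
          rw [h1 _ (by simpa using hz)]
          exact mul_ne_zero hl (χ.val_isUnit _).ne_zero
      rw [this, Set.ncard_image_of_injective _ (add_left_injective a)]
      rfl
    have hsh : ∀ y ∈ H, (fun x => f (x - y)) = χ (-y) • f := by
      intro y hy
      funext x
      have hiff : x - y - a ∈ H ↔ x - a ∈ H := by
        rw [sub_right_comm]
        exact ⟨fun h => by simpa using add_mem h hy, fun h => sub_mem h hy⟩
      by_cases hx : x - a ∈ H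
      · rw [h1 _ (hiff.mpr hx), Pi.smul_apply, h1 x hx, sub_eq_add_neg, AddChar.map_add_eq_mul,
          smul_eq_mul]
        ring
      · rw [h2 _ (mt hiff.mp hx), Pi.smul_apply, h2 x hx, smul_zero]
    have hT : ∀ ψ : AddChar G E, fourierTransform f ψ ≠ 0 → ∀ y ∈ H, ψ y = χ y := by
      intro ψ hψ y hy
      have h3 := DS.fourier_shift f (-y) ψ
      rw [hsh _ (neg_mem hy)] at h3
      have h4 : fourierTransform (χ (- -y) • f) ψ = χ (- -y) * fourierTransform f ψ := by
        simp [fourierTransform, Finset.mul_sum, mul_assoc]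
      rw [h4] at h3
      have h5 := mul_right_cancel₀ hψ h3
      simpa using h5.symm
    let P : Submodule E (G → E) :=
      { carrier := {g | ∀ x, ∀ y ∈ H, g (x + y) = g x * χ y}
        add_mem' := by
          intro g k hg hk x y hy
          simp [hg x y hy, hk x y hy, add_mul]
        zero_mem' := by intro x y hy; simp
        smul_mem' := by
          intro c g hg x y hy
          simp [hg x y hy, mul_assoc] }
    have : Fintype (G ⧸ H) := Fintype.ofFinite _
    let L : P →ₗ[E] (G ⧸ H → E) :=
      { toFun := fun g q => g.1 q.out
        map_add' := fun _ _ => rfl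
        map_smul' := fun _ _ => rfl }
    have hL : Function.Injective L := by
      rw [injective_iff_map_eq_zero]
      intro g hg
      apply Subtype.ext
      funext x
      have h3 : g.1 (Quotient.out (x : G ⧸ H)) = 0 := congrFun hg (x : G ⧸ H)
      obtain ⟨h, hh⟩ := QuotientAddGroup.mk_out_eq_add H x
      have h4 := g.2 x h h.2
      rw [← hh, h3] at h4
      exact (mul_eq_zero.mp h4.symm).resolve_right (χ.val_isUnit _).ne_zero
    have hP := LinearMap.finrank_le_finrank_of_injective hL
    rw [Module.finrank_fintype_fun_eq_card, ← Nat.card_eq_fintype_card] at hP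
    have hli : LinearIndependent E
        (fun ψ : Function.support (fourierTransform f) => (⟨ψ.1, fun x y hy => by
          rw [AddChar.map_add_eq_mul, hT ψ.1 ψ.2 y hy]⟩ : P)) := by
      apply LinearIndependent.of_comp P.subtype
      exact (DS.linInd (G := G) (E := E)).comp (fun ψ : Function.support (fourierTransform f) => ψ.1)
        Subtype.val_injective
    have : Fintype (Function.support (fourierTransform f)) := Fintype.ofFinite _
    have hc := hli.fintype_card_le_finrank
    rw [← Nat.card_eq_fintype_card, Nat.card_coe_set_eq] at hc
    rw [hS, ← Nat.card_eq_fintype_card, AddSubgroup.card_eq_card_quotient_mul_card_addSubgroup H,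
      mul_comm]
    exact Nat.mul_le_mul_right _ (hc.trans hP)
end

section
/- Let (G,+) be a finite abelian group and E a field of characteristic 0 or of characteristic p not dividing |G| containing a primitive N-th root of unity, N = exp(G). Then for every nonzero function f : G → E with Fourier transform f̂, |supp(f)| · |supp(f̂)| ≥ |G| + |supp(f̂)| − |H(supp(f̂))|, where H(supp(f̂)) = {ψ ∈ Ĝ : ψ·supp(f̂) = supp(f̂)} is the stabilizer of supp(f̂) in the character group Ĝ. -/
open Function Set

section Helpers

variable {G E : Type*} [AddCommGroup G] [Fintype G] [Field E]

lemma ft_key (f : G → E) (B : Finset (AddChar G E)) (c : AddChar G E → E)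
    (h : ∀ x ∈ Function.support f, ∑ ψ ∈ B, c ψ * ψ x = 0) (χ : AddChar G E) :
    ∑ ψ ∈ B, c ψ * fourierTransform f (ψ⁻¹ * χ) = 0 := by
  simp only [fourierTransform, Finset.mul_sum]
  rw [Finset.sum_comm]
  refine Finset.sum_eq_zero fun x _ => ?_
  by_cases hx : f x = 0
  · simp [hx]
  · have := h x hx
    calc _ = f x * χ (-x) * ∑ ψ ∈ B, c ψ * ψ x := by
          rw [Finset.mul_sum]
          refine Finset.sum_congr rfl fun ψ _ => ?_
          rw [AddChar.mul_apply, AddChar.inv_apply, neg_neg]; ring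
      _ = 0 := by rw [this, mul_zero]

lemma card_key [DecidableEq (AddChar G E)] (f : G → E) (B : Finset (AddChar G E))
    (ψ₀ : AddChar G E)
    (h0 : fourierTransform f ψ₀⁻¹ ≠ 0) (hB0 : ∀ ψ ∈ B, fourierTransform f ψ⁻¹ = 0)
    (hB : ∀ ψ ∈ B, ∃ χ, fourierTransform f (ψ⁻¹ * χ) ≠ 0 ∧
      ∀ φ ∈ B, φ ≠ ψ → fourierTransform f (φ⁻¹ * χ) = 0) :
    B.card + 1 ≤ (Function.support f).ncard := by
  classical
  have hn : ψ₀ ∉ B := fun h => h0 (hB0 _ h)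
  have key : ∀ c : AddChar G E → E,
      (∀ x ∈ Function.support f, ∑ ψ ∈ insert ψ₀ B, c ψ * ψ x = 0) →
      ∀ ψ ∈ insert ψ₀ B, c ψ = 0 := by
    intro c hc
    have h1 := ft_key f _ c hc
    have hz : c ψ₀ = 0 := by
      have := h1 1
      rw [Finset.sum_insert hn, Finset.sum_eq_zero] at this
      · simpa [h0] using this
      · intro ψ hψ; simp [hB0 ψ hψ]
    intro ψ hψ
    rcases Finset.mem_insert.1 hψ with rfl | hψ
    · exact hz
    obtain ⟨χ, hχ, hχ'⟩ := hB ψ hψ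
    have := h1 χ
    rw [Finset.sum_insert hn, hz, zero_mul, zero_add, Finset.sum_eq_single ψ] at this
    · simpa [hχ] using this
    · intro φ hφ hne; simp [hχ' φ hφ hne]
    · intro h; exact absurd hψ h
  have hli : LinearIndependent E
      (fun (ψ : {ψ // ψ ∈ insert ψ₀ B}) (x : Function.support f) => ψ.1 x.1) := by
    rw [Fintype.linearIndependent_iff]
    intro g hg i
    have := key (fun ψ => if h : ψ ∈ insert ψ₀ B then g ⟨ψ, h⟩ else 0) (by
      intro x hx
      have := congrFun hg ⟨x, hx⟩
      simp only [Finset.sum_apply, Pi.smul_apply, smul_eq_mul, Pi.zero_apply] at this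
      rw [← this, ← Finset.sum_coe_sort]
      refine Finset.sum_congr rfl fun ψ _ => ?_
      rw [dif_pos ψ.2]) i.1 i.2
    simpa only [i.2, dif_pos] using this
  have := hli.fintype_card_le_finrank
  rw [Module.finrank_fintype_fun_eq_card, Fintype.card_coe, Finset.card_insert_of_notMem hn] at this
  rwa [← Nat.card_coe_set_eq, Nat.card_eq_fintype_card]

lemma card_dual (hroot : ∃ ζ : E, IsPrimitiveRoot ζ (AddMonoid.exponent G)) :
    Nat.card (AddChar G E) = Fintype.card G := by
  have hr : HasEnoughRootsOfUnity E (Monoid.exponent (Multiplicative G)) := by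
    have : NeZero (AddMonoid.exponent G) := ⟨AddMonoid.exponent_ne_zero_of_finite⟩
    obtain ⟨ζ, h⟩ := hroot
    rw [Monoid.exponent_multiplicative]
    exact ⟨⟨ζ, h⟩, inferInstance⟩
  rw [← Nat.card_eq_fintype_card, ← Nat.card_congr (Multiplicative.ofAdd (α := G)).symm,
    ← CommGroup.card_monoidHom_of_hasEnoughRootsOfUnity (Multiplicative G) E]
  refine Nat.card_congr ?_
  exact AddChar.toMonoidHomEquiv.trans (MonoidHom.toHomUnitsMulEquiv).toEquiv

lemma linInd_dual (G E : Type*) [AddCommGroup G] [Fintype G] [Field E] :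
    LinearIndependent E ((⇑) : AddChar G E → G → E) :=
  (linearIndependent_monoidHom (Multiplicative G) E).comp AddChar.toMonoidHomEquiv
    AddChar.toMonoidHomEquiv.injective

lemma finite_dual (G E : Type*) [AddCommGroup G] [Fintype G] [Field E] :
    Finite (AddChar G E) :=
  (linInd_dual G E).finite

lemma ft_ne (hroot : ∃ ζ : E, IsPrimitiveRoot ζ (AddMonoid.exponent G))
    (f : G → E) (hf : f ≠ 0) : ∃ χ, fourierTransform f χ ≠ 0 := by
  classical
  by_contra! h
  apply hf
  have hli := linInd_dual G E
  have : Fintype (AddChar G E) := @Fintype.ofFinite _ (finite_dual G E)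
  have hs := LinearIndependent.span_eq_top_of_card_eq_finrank' (K := E) (V := G → E) hli (by
    rw [Module.finrank_fintype_fun_eq_card, ← card_dual hroot, Nat.card_eq_fintype_card])
  have hz : ∀ g : G → E, ∑ x, f x * g x = 0 := by
    intro g
    have hg : g ∈ Submodule.span E (Set.range ((⇑) : AddChar G E → G → E)) := by
      rw [hs]; trivial
    induction hg using Submodule.span_induction with
    | mem g hg =>
      obtain ⟨χ, rfl⟩ := hg
      simpa [fourierTransform, AddChar.inv_apply] using h χ⁻¹
    | zero => simp
    | add a b _ _ ha hb => simp [mul_add, Finset.sum_add_distrib, ha, hb]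
    | smul r a _ ha =>
      simp only [Pi.smul_apply, smul_eq_mul, mul_left_comm, ← Finset.mul_sum, ha, mul_zero]
  funext x
  simpa [Pi.single_apply] using hz (Pi.single x 1)

end Helpers

/-- the sharpened Donoho–Stark uncertainty principle:
`|supp f|·|supp f̂| ≥ |G| + |supp f̂| - |H(supp f̂)|`, where `H(supp f̂)` is the stabilizer
of `supp f̂` in the character group. -/
theorem stmt_17 {G E : Type*} [AddCommGroup G] [Fintype G] [Field E]
    (hchar : (Fintype.card G : E) ≠ 0)
    (hroot : ∃ ζ : E, IsPrimitiveRoot ζ (AddMonoid.exponent G))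
    (f : G → E) (hf : f ≠ 0) :
    (Fintype.card G : ℤ) + (Function.support (fourierTransform f)).ncard -
        ({ψ : AddChar G E |
            (fun χ => ψ * χ) '' Function.support (fourierTransform f)
              = Function.support (fourierTransform f)} : Set (AddChar G E)).ncard ≤
      ((Function.support f).ncard : ℤ) * (Function.support (fourierTransform f)).ncard := by
  classical
  have : Fintype (AddChar G E) := @Fintype.ofFinite _ (finite_dual G E)
  set H := ({ψ : AddChar G E |
            (fun χ => ψ * χ) '' Function.support (fourierTransform f)
              = Function.support (fourierTransform f)} : Set (AddChar G E)) with hH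
  set T := Function.support (fourierTransform f) with hT
  obtain ⟨χ₀, hχ₀⟩ := ft_ne hroot f hf
  let tr : AddChar G E → Finset (AddChar G E) := fun ψ => Finset.univ.filter (fun χ => ψ⁻¹ * χ ∈ T)
  have htr : ∀ ψ, (tr ψ).card = T.ncard := by
    intro ψ
    rw [← Set.ncard_image_of_injective T (mul_right_injective ψ), ← Set.ncard_coe_finset]
    congr 1
    ext χ
    simp [tr]
  -- families of translates avoiding `1` and covering the complement of `H`
  let P : Finset (AddChar G E) → Prop := fun B =>
    (∀ ψ ∈ B, ψ⁻¹ ∉ T) ∧ ∀ χ, χ ∉ H → χ ∈ B.biUnion tr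
  have hP : P (Finset.univ.filter (fun ψ => ψ⁻¹ ∉ T)) := by
    refine ⟨fun ψ hψ => (Finset.mem_filter.1 hψ).2, fun χ hχ => ?_⟩
    by_contra hcon
    apply hχ
    have h1 : ∀ ψ : AddChar G E, ψ⁻¹ * χ ∈ T → ψ⁻¹ ∈ T := by
      intro ψ h
      by_contra h'
      exact hcon (Finset.mem_biUnion.2 ⟨ψ, by simpa using h', by simpa [tr] using h⟩)
    have h2 : T ⊆ (fun φ => χ * φ) '' T := by
      intro φ hφ
      refine ⟨φ * χ⁻¹, ?_, by simp⟩
      have := h1 (φ * χ⁻¹)⁻¹ (by simpa using hφ)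
      simpa using this
    exact (Set.eq_of_subset_of_ncard_le h2
      (Set.ncard_image_of_injective T (mul_right_injective χ)).le (Set.toFinite _)).symm
  obtain ⟨B, -, hB⟩ := exists_minimal_le_of_wellFoundedLT P _ hP
  have hcard := card_key f B χ₀⁻¹ (by simpa using hχ₀)
    (fun ψ hψ => by simpa [hT] using hB.prop.1 ψ hψ) (by
      intro ψ hψ
      by_contra! hcon
      have : P (B.erase ψ) := by
        refine ⟨fun φ hφ => hB.prop.1 φ (Finset.mem_of_mem_erase hφ), fun χ hχ => ?_⟩
        obtain ⟨φ, hφ, hφχ⟩ := Finset.mem_biUnion.1 (hB.prop.2 χ hχ)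
        by_cases he : φ = ψ
        · subst he
          obtain ⟨φ', h1, h2, h3⟩ := hcon χ (by simpa [tr, hT] using hφχ)
          exact Finset.mem_biUnion.2 ⟨φ', Finset.mem_erase.2 ⟨h2, h1⟩, by simpa [tr, hT] using h3⟩
        · exact Finset.mem_biUnion.2 ⟨φ, Finset.mem_erase.2 ⟨he, hφ⟩, hφχ⟩
      exact Finset.notMem_erase ψ B (hB.le_of_le this (Finset.erase_subset _ _) hψ))
  have hcov : Fintype.card G ≤ H.ncard + B.card * T.ncard := by
    rw [← card_dual hroot, Nat.card_eq_fintype_card, ← Finset.card_univ,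
      Set.ncard_eq_toFinset_card' H]
    calc _ ≤ (H.toFinset ∪ B.biUnion tr).card := by
          apply Finset.card_le_card
          intro χ _
          by_cases h : χ ∈ H
          · exact Finset.mem_union_left _ (by simpa using h)
          · exact Finset.mem_union_right _ (hB.prop.2 χ h)
      _ ≤ _ := (Finset.card_union_le _ _).trans
          (Nat.add_le_add_left (Finset.card_biUnion_le_card_mul _ _ _ fun ψ _ => (htr ψ).le) _)
  have h5 := Nat.mul_le_mul_right T.ncard hcard
  zify at h5 hcov
  linarith
end

section
/- Let (G,+) be a finite abelian group, E a field of characteristic 0 or of characteristic p not dividing |G| containing a primitive N-th root of unity, N = exp(G), and f : G → E a function. Let χ be an E-valued character of G, and let a and e be integers with e ≥ 1. If f̂(χ^i) = 0 for all integers i with a ≤ i ≤ a + e − 2, and f̂(χ^{a+e−1}) ≠ 0, where χ^i denotes the i-th power of χ in the character group and f̂ is the Fourier transform of f, then |supp(f)| ≥ e. -/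
open Function Set

/-- a BCH-type bound: if `f̂(χ^i) = 0` for `a ≤ i ≤ a + e - 2` and
`f̂(χ^{a+e-1}) ≠ 0`, then `|supp f| ≥ e`. -/
theorem stmt_19 {G E : Type*} [AddCommGroup G] [Fintype G] [Field E]
    (hchar : (Fintype.card G : E) ≠ 0)
    (hroot : ∃ ζ : E, IsPrimitiveRoot ζ (AddMonoid.exponent G))
    (f : G → E) (χ : AddChar G E) (a e : ℤ) (he : 1 ≤ e)
    (hz : ∀ i : ℤ, a ≤ i → i ≤ a + e - 2 → fourierTransform f (χ ^ i) = 0)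
    (hnz : fourierTransform f (χ ^ (a + e - 1)) ≠ 0) :
    e ≤ (Function.support f).ncard := by
  classical
  by_contra hlt
  push Not at hlt
  have hy : ∀ x : G, χ (-x) ≠ 0 := fun x h => by
    have h1 : χ (-x + x) = 1 := by simp
    rw [AddChar.map_add_eq_mul, h, zero_mul] at h1
    exact zero_ne_one h1
  have hft : ∀ i : ℤ, fourierTransform f (χ ^ i) = ∑ x, f x * (χ (-x)) ^ i := by
    intro i
    unfold fourierTransform
    refine Finset.sum_congr rfl fun x _ => ?_
    congr 1
    cases i with
    | ofNat n => simp [AddChar.pow_apply]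
    | negSucc n =>
      rw [zpow_negSucc, zpow_negSucc, AddChar.inv_apply, AddChar.pow_apply,
        AddChar.map_neg_eq_inv, inv_pow]
  set S : Finset G := Finset.univ.filter (fun x => f x ≠ 0) with hS
  have hcard : (Function.support f).ncard = S.card := by
    rw [← Set.ncard_coe_finset]
    congr 1
    ext x
    simp [hS]
  rw [hcard] at hlt
  set P : Polynomial E := ∏ x ∈ S, (Polynomial.X - Polynomial.C (χ (-x))) with hP
  have hmonic : P.Monic := Polynomial.monic_prod_of_monic _ _ fun x _ => Polynomial.monic_X_sub_C _
  have hdeg : P.natDegree = S.card := by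
    rw [hP, Polynomial.natDegree_prod_of_monic _ _ fun x _ => Polynomial.monic_X_sub_C _]
    simp
  have hroot : ∀ x, f x * (χ (-x)) ^ (a + e - 1 - S.card) * P.eval (χ (-x)) = 0 := by
    intro x
    by_cases hx : f x = 0
    · simp [hx]
    · have : P.eval (χ (-x)) = 0 := by
        rw [hP, Polynomial.eval_prod]
        exact Finset.prod_eq_zero (i := x) (by simp [hS, hx]) (by simp)
      rw [this, mul_zero]
  apply hnz
  have key : ∑ k ∈ Finset.range (S.card + 1),
      P.coeff k * fourierTransform f (χ ^ (a + e - 1 - S.card + (k : ℤ))) = 0 := by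
    rw [← Finset.sum_eq_zero (s := Finset.univ) fun x _ => hroot x]
    simp_rw [hft, Polynomial.eval_eq_sum_range, hdeg, Finset.mul_sum]
    rw [Finset.sum_comm]
    refine Finset.sum_congr rfl fun x _ => Finset.sum_congr rfl fun k _ => ?_
    rw [zpow_add₀ (hy x), zpow_natCast]
    ring
  rw [Finset.sum_range_succ, Finset.sum_eq_zero, zero_add] at key
  · have h1 : P.coeff S.card = 1 := by rw [← hdeg]; exact hmonic
    rw [h1, one_mul, sub_add_cancel] at key
    exact key
  · intro k hk
    have hk' := Finset.mem_range.mp hk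
    rw [hz _ (by omega) (by omega), mul_zero]
end
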